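/- Let A₂ ⊂ ℝ² be the triangular lattice generated by (1,0) and (1/2,√3/2). For any α > 0, any vector u ∈ ℝ² and any Bravais lattice Λ = Mℤ² ⊂ ℝ² with |det M| = √3/2 (the covolume of A₂), one has θ_{A₂+u}(α) ≤ θ_Λ(α), with equality if and only if u ∈ A₂ and Λ = R·A₂ for some rotation R ∈ SO(2). -/

import Mathlib

/-!
A lattice `Mℤ²` of covolume `√3/2` has a Gram form `a x² + b x y + c y²` with `4 a c - b² = 3`, and
its theta function is `formTheta a b c (π α)`; the lattice `A₂` corresponds to `x² + x y + y²`.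

*Translations.* Poisson summation (`theta_shift_dual`) writes `θ_{A₂+u}` as a positive constant
times a series of positive terms weighted by cosines, which is largest exactly when all the cosines
equal one, that is when `u ∈ A₂` (`hex_shift`). It remains to show that `A₂` minimises the theta
function among lattices of its covolume (Montgomery's theorem, `form_min`).

*Minimality.* The case `u = 0` of Poisson summation is a functional equation exchanging `α` and
`4/(3α)` (`formTheta_dual`), so `t = π α ≥ 18/5` may be assumed. By Gauss reduction
(`exists_reduced`) the form may be assumed to satisfy `0 ≤ b ≤ a ≤ c`. There are two cases,
according to the size of `κ = (2a + 2c - b)/3 ≥ 1`.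

* If `κ ≤ 6/5` (`near_bound`), the theta series is averaged over the order-three automorphism
  `(m, n) ↦ (-m-n, m)` of the hexagonal form. After averaging, the inequality holds term by term:
  the values `A, B, C` of the form on an orbit, divided by the hexagonal norm `N`, satisfy
  `A + B + C = 3κ` and `(A + B + C)² - 2(A² + B² + C²) = 3`, and these two relations imply
  `exp (-τ A) + exp (-τ B) + exp (-τ C) ≥ 3 exp (-τ)` for `τ = t N ≥ 18/5` (`three_exp_tau`).
* If `κ > 6/5` (`far_bound`), the reduced form has `a ≤ 33/50`, and `1 + 2 exp (-t a)` already
  exceeds an explicit upper bound of the hexagonal theta function (`hex_theta_upper`).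

*Equality.* It forces the reduced form to be `x² + x y + y²`, so some basis of the lattice has the
Gram matrix and the orientation of the standard basis of `A₂`, and the lattice is a rotated `A₂`
(`exists_rotation`). Conversely, the theta function depends only on the lattice up to rotation.
-/

open scoped BigOperators

/-- The translated lattice theta function
`θ_{MZ^d + u}(α) = Σ_{k∈ℤ^d} exp(−πα|Mk+u|²)`. -/
noncomputable def latTheta (d : ℕ) (M : Matrix (Fin d) (Fin d) ℝ)
    (u : Fin d → ℝ) (α : ℝ) : ℝ :=
  ∑' k : Fin d → ℤ,
    Real.exp (-Real.pi * α * ∑ i, (M.mulVec (fun j => (k j : ℝ)) i + u i) ^ 2)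

/-- Generator matrix of the triangular lattice `A₂`, with columns `(1,0)` and `(1/2,√3/2)`. -/
noncomputable def A2mat : Matrix (Fin 2) (Fin 2) ℝ :=
  !![1, 1 / 2; 0, Real.sqrt 3 / 2]

/-! ### An inequality for three exponentials -/

/-- Odd-order Taylor polynomials of `exp` are global lower bounds; here order five. -/
lemma exp_ge_quintic (u : ℝ) :
    1 + u + u ^ 2 / 2 + u ^ 3 / 6 + u ^ 4 / 24 + u ^ 5 / 120 ≤ Real.exp u := by
  rcases le_total 0 u with hu | hu
  · have := Real.sum_le_exp_of_nonneg hu 6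
    norm_num [Finset.sum_range_succ, Nat.factorial] at this
    exact this
  -- for `u ≤ 0`, the Taylor polynomial times `exp (-u)` has derivative `-(u^5/120) exp (-u) ≥ 0`
  · let g : ℝ → ℝ := fun u =>
      (1 + u + u ^ 2 / 2 + u ^ 3 / 6 + u ^ 4 / 24 + u ^ 5 / 120) * Real.exp (-u)
    have hd : ∀ x, HasDerivAt g (-(x ^ 5 / 120) * Real.exp (-x)) x := by
      intro x
      have h1 : HasDerivAt (fun u : ℝ => 1 + u + u ^ 2 / 2 + u ^ 3 / 6 + u ^ 4 / 24 + u ^ 5 / 120)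
          (1 + x + x ^ 2 / 2 + x ^ 3 / 6 + x ^ 4 / 24) x := by
        have := (((((hasDerivAt_id x).const_add 1).add ((hasDerivAt_pow 2 x).div_const 2)).add
          ((hasDerivAt_pow 3 x).div_const 6)).add ((hasDerivAt_pow 4 x).div_const 24)).add
          ((hasDerivAt_pow 5 x).div_const 120)
        refine this.congr_deriv ?_
        norm_num
        ring
      refine (h1.mul (hasDerivAt_neg x).exp).congr_deriv ?_
      ring
    have hm : MonotoneOn g (Set.Iic 0) := by
      refine monotoneOn_of_deriv_nonneg (convex_Iic 0)
        (fun x _ => (hd x).continuousAt.continuousWithinAt)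
        (fun x _ => (hd x).differentiableAt.differentiableWithinAt) ?_
      intro x hx
      rw [interior_Iic] at hx
      rw [(hd x).deriv]
      have : x ^ 5 ≤ 0 := (Odd.pow_nonpos_iff (by decide)).2 (le_of_lt hx)
      have := Real.exp_pos (-x)
      exact mul_nonneg (by linarith) this.le
    have h := hm hu (Set.mem_Iic.2 le_rfl) hu
    simp only [g] at h
    norm_num [Real.exp_neg] at h
    rw [← div_eq_mul_inv, div_le_one (Real.exp_pos u)] at h
    exact h

lemma exp_le_poly {y : ℝ} (h0 : 0 ≤ y) (h1 : y ≤ 3/4) :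
    Real.exp y ≤ 1 + y + y ^ 2 / 2 + y ^ 3 / 6 + y ^ 4 / 12 := by
  have := Real.exp_bound' h0 (by linarith) (n := 4) (by norm_num)
  norm_num [Finset.sum_range_succ, Nat.factorial] at this
  nlinarith [pow_nonneg h0 4]

/-- The one-variable inequality behind `three_exp`: the left side bounds `exp y` from above with some
room to spare, the right side bounds the mean of the three exponentials from below. -/
lemma poly_ineq {y X : ℝ} (h0 : 0 ≤ y) (h1 : y ≤ 18/25) (hX : X = 7.2 * y + y ^ 2) :
   (1 + y + y ^ 2 / 2 + y ^ 3 / 6 + y ^ 4 / 12) + y/1000 ≤ 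
    1 + X/4 - X * (X/4+1)/24 + X^2/64 - X^2*(X/4+1)/384 := by
  subst hX
  nlinarith [pow_nonneg h0 2, pow_nonneg h0 3, pow_nonneg h0 4, pow_nonneg h0 5, mul_nonneg h0 (sub_nonneg.2 h1), mul_nonneg (pow_nonneg h0 2) (sub_nonneg.2 h1), mul_nonneg (pow_nonneg h0 3) (sub_nonneg.2 h1), mul_nonneg (pow_nonneg h0 4) (sub_nonneg.2 h1), mul_nonneg (pow_nonneg h0 5) (sub_nonneg.2 h1)]

/-- The key inequality at the threshold `18/5`. With `p, q, r` the three exponents on the right,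
`p + q + r = 0` and `p² + q² + r² = 3X/2`, so the power sums up to order five depend only on `X`
and on `e₃ = p q r`. The quintic Taylor bound is increasing in `e₃`, and
`e₃ ≥ -(X/4)^{3/2} · 2 ≥ -(X/4)(X/4 + 1)`, which leaves an inequality in one variable. -/
lemma three_exp {κ v w z : ℝ} (h1 : 1 < κ) (h2 : κ ≤ 6/5) (hs : v + w + z = 0)
    (hq : v ^ 2 + w ^ 2 + z ^ 2 = 3 / 2 * (κ ^ 2 - 1)) :
    3 * Real.exp (18/5 * (κ - 1)) <
      Real.exp (-(18/5) * v) + Real.exp (-(18/5) * w) + Real.exp (-(18/5) * z) := by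
  obtain ⟨y, hy⟩ : ∃ y, y = 18/5 * (κ - 1) := ⟨_, rfl⟩
  obtain ⟨X, hX⟩ : ∃ X, X = 7.2 * y + y ^ 2 := ⟨_, rfl⟩
  obtain ⟨p, hp⟩ : ∃ p, p = -(18/5) * v := ⟨_, rfl⟩
  obtain ⟨q, hq'⟩ : ∃ q, q = -(18/5) * w := ⟨_, rfl⟩
  have hr' : -(18/5) * z = -p - q := by subst hp hq'; linarith
  have h3 := poly_ineq (y := y) (by linarith) (by linarith) hX
  have h4 := exp_le_poly (y := y) (by linarith) (by linarith)
  have hX' : p^2 + p*q + q^2 = 3/4 * X := by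
    have : z = -v-w := by linarith
    subst this hp hq' hX hy
    nlinarith
  have hXp : 0 ≤ X := by nlinarith [sq_nonneg (p+q), sq_nonneg p, sq_nonneg q]
  -- the discriminant of `(T - p)(T - q)(T - r)` is nonnegative, so `e₃² ≤ X³/16`; then AM-GM
  have he3 : -(X/4 * (X/4+1)) ≤ p * q * (-p-q) := by
    refine (abs_le_of_sq_le_sq' ?_ (by positivity)).1
    have : (p * q * (-p-q))^2 ≤ X^3/16 := by
      have : X = 4/3 * (p^2 + p*q + q^2) := by linarith
      rw [this]
      nlinarith [sq_nonneg ((p-q)*(2*p+q)*(p+2*q))]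
    refine this.trans ?_
    nlinarith [mul_nonneg (sq_nonneg X) (sq_nonneg (X/4-1))]
  rw [← hy, ← hp, ← hq', hr']
  have e1 := exp_ge_quintic p
  have e2 := exp_ge_quintic q
  have e3 := exp_ge_quintic (-p-q)
  have i2 : p^2 + q^2 + (-p-q)^2 = 3/2 * X := by linarith
  have i3 : p^3 + q^3 + (-p-q)^3 = 3 * (p * q * (-p-q)) := by ring
  have i4 : p^4 + q^4 + (-p-q)^4 = 9/8 * X^2 := by
    have : X = 4/3 * (p^2 + p*q + q^2) := by linarith
    rw [this]; ring
  have i5 : p^5 + q^5 + (-p-q)^5 = 15/4 * X * (p * q * (-p-q)) := by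
    have : X = 4/3 * (p^2 + p*q + q^2) := by linarith
    rw [this]; ring
  have := mul_nonneg hXp (sub_nonneg.2 he3)
  have hy0 : 0 < y := by linarith
  nlinarith

/-- The key inequality for all `τ ≥ 18/5`, deduced from the threshold case by the power mean
inequality with exponent `τ / (18/5)`. In the application `A, B, C` are the values of a form of
discriminant `-3` on an orbit of the order-three rotation of the hexagonal form, divided by the
hexagonal norm. -/
lemma three_exp_tau {κ A B C τ : ℝ} (hτ : 18/5 ≤ τ) (h1 : 1 < κ) (h2 : κ ≤ 6/5)
    (hs : A + B + C = 3 * κ)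
    (hq : (A + B + C) ^ 2 - 2 * (A ^ 2 + B ^ 2 + C ^ 2) = 3) :
    3 * Real.exp (-τ) < Real.exp (-τ * A) + Real.exp (-τ * B) + Real.exp (-τ * C) := by
  have h := three_exp (v := A - κ) (w := B - κ) (z := C - κ) h1 h2 (by linarith)
    (by nlinarith)
  set p := τ / (18/5) with hp
  have hp1 : 1 ≤ p := by rw [hp, le_div_iff₀ (by norm_num)]; linarith
  have hj := Real.rpow_arith_mean_le_arith_mean_rpow Finset.univ ![1/3, 1/3, 1/3]
    ![Real.exp (-(18/5) * (A - κ)), Real.exp (-(18/5) * (B - κ)), Real.exp (-(18/5) * (C - κ))]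
    (by intro i _; fin_cases i <;> norm_num) (by simp [Fin.sum_univ_three]; norm_num)
    (by intro i _; fin_cases i <;> exact (Real.exp_pos _).le) hp1
  simp only [Fin.sum_univ_three, Matrix.cons_val_zero, Matrix.cons_val_one, Matrix.cons_val_two,
    Matrix.head_cons, Matrix.tail_cons, ← Real.exp_mul] at hj
  have hlt := Real.rpow_lt_rpow (Real.exp_pos _).le
    (show Real.exp (18/5 * (κ - 1)) < 1/3 * Real.exp (-(18/5) * (A - κ)) +
      1/3 * Real.exp (-(18/5) * (B - κ)) + 1/3 * Real.exp (-(18/5) * (C - κ)) by linarith)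
    (show 0 < p by linarith)
  rw [← Real.exp_mul] at hlt
  have hτp : τ = 18/5 * p := by rw [hp]; ring
  have key := mul_lt_mul_of_pos_right (hlt.trans_le hj) (Real.exp_pos (-τ * κ))
  simp only [add_mul, mul_assoc, ← Real.exp_add] at key
  have e : ∀ x, -(18/5) * ((x - κ) * p) + -τ * κ = -τ * x := by intro x; rw [hτp]; ring
  have e' : 18/5 * ((κ - 1) * p) + -τ * κ = -τ := by rw [hτp]; ring
  simp only [neg_mul] at key e e' ⊢
  rw [e, e, e, e'] at key
  linarith

/-- Non-strict version including `κ = 1`, where the hypotheses force `A = B = C = 1`. -/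
lemma three_exp_tau_le {κ A B C τ : ℝ} (hτ : 18/5 ≤ τ) (h1 : 1 ≤ κ) (h2 : κ ≤ 6/5)
    (hs : A + B + C = 3 * κ)
    (hq : (A + B + C) ^ 2 - 2 * (A ^ 2 + B ^ 2 + C ^ 2) = 3) :
    3 * Real.exp (-τ) ≤ Real.exp (-τ * A) + Real.exp (-τ * B) + Real.exp (-τ * C) := by
  rcases h1.lt_or_eq with h | rfl
  · exact (three_exp_tau hτ h h2 hs hq).le
  · have hz : (A - 1) ^ 2 + (B - 1) ^ 2 + (C - 1) ^ 2 = 0 := by nlinarith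
    have hA : A = 1 := by nlinarith [sq_nonneg (A-1), sq_nonneg (B-1), sq_nonneg (C-1)]
    have hB : B = 1 := by nlinarith [sq_nonneg (A-1), sq_nonneg (B-1), sq_nonneg (C-1)]
    have hC : C = 1 := by nlinarith [sq_nonneg (A-1), sq_nonneg (B-1), sq_nonneg (C-1)]
    subst hA hB hC
    simp only [mul_one]; linarith

/-! ### Reduction of binary quadratic forms -/

/-- The real binary quadratic form `a x² + b x y + c y²`. -/
def binForm (a b c x y : ℝ) : ℝ := a * x ^ 2 + b * x * y + c * y ^ 2

/-- Gauss reduction: a positive form of discriminant `-3` is equivalent under `GL₂(ℤ)` to one with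
`0 ≤ b' ≤ a' ≤ c'`. It follows from the fundamental domain of the modular group; `GL₂` rather than
`SL₂` is what allows the sign of `b'` to be fixed. -/
lemma exists_reduced {a b c : ℝ} (ha : 0 < a) (hD : 4 * a * c - b ^ 2 = 3) :
    ∃ p q r s : ℤ, (p * s - q * r = 1 ∨ p * s - q * r = -1) ∧ ∃ a' b' c' : ℝ,
      0 ≤ b' ∧ b' ≤ a' ∧ a' ≤ c' ∧ 0 < a' ∧ 4 * a' * c' - b' ^ 2 = 3 ∧
      ∀ x y : ℝ, binForm a b c (p * x + q * y) (r * x + s * y) = binForm a' b' c' x y := by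
  -- the point `z` of the upper half-plane attached to the form: `binForm a b c x y = a |x + y z|²`
  let z : UpperHalfPlane := ⟨⟨b / (2 * a), √3 / (2 * a)⟩, by positivity⟩
  obtain ⟨g, hg⟩ := ModularGroup.exists_smul_mem_fd z
  obtain ⟨p, hp⟩ : ∃ p, p = g 0 0 := ⟨_, rfl⟩
  obtain ⟨q, hq⟩ : ∃ p, p = g 0 1 := ⟨_, rfl⟩
  obtain ⟨r, hr⟩ : ∃ p, p = g 1 0 := ⟨_, rfl⟩
  obtain ⟨s, hs⟩ : ∃ p, p = g 1 1 := ⟨_, rfl⟩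
  have hdet : p * s - q * r = 1 := by
    have := g.det_coe
    rw [Matrix.det_fin_two] at this
    rw [hp, hq, hr, hs]; exact this
  have hdetR : (p : ℝ) * s - q * r = 1 := by exact_mod_cast hdet
  have h3 : √3 ^ 2 = 3 := Real.sq_sqrt (by norm_num)
  set a' : ℝ := binForm a b c s r with ha'
  set c' : ℝ := binForm a b c q p with hc'
  set b' : ℝ := 2 * a * s * q + b * (s * p + r * q) + 2 * c * r * p with hb'
  have hD' : 4 * a' * c' - b' ^ 2 = 3 := by
    have : 4 * a' * c' - b' ^ 2 = (4 * a * c - b ^ 2) * ((p : ℝ) * s - q * r) ^ 2 := by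
      rw [ha', hc', hb']; unfold binForm; ring
    rw [this, hD, hdetR]; norm_num
  have hform : ∀ x y : ℝ, binForm a b c (s * x + q * y) (r * x + p * y) = binForm a' b' c' x y := by
    intro x y; rw [ha', hc', hb']; unfold binForm; ring
  have ha'0 : 0 < a' := by
    have h1 : 4 * a * a' = (2 * a * s + b * r) ^ 2 + 3 * r ^ 2 := by
      rw [ha', ← hD]; unfold binForm; ring
    have h2 : a' ≠ 0 := by intro h; rw [h] at hD'; nlinarith [sq_nonneg b']
    have h4 : 0 ≤ a' := by
      by_contra h
      nlinarith [sq_nonneg (2 * a * s + b * r), sq_nonneg (r:ℝ), mul_pos ha (neg_pos.2 (not_le.1 h))]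
    exact lt_of_le_of_ne h4 h2.symm
  have hz : ((g • z : UpperHalfPlane) : ℂ) = ((p : ℂ) * z + q) / ((r : ℂ) * z + s) := by
    rw [UpperHalfPlane.coe_specialLinearGroup_apply, hp, hq, hr, hs]; simp
  have hden : Complex.normSq ((r : ℂ) * z + s) = a' / a := by
    rw [Complex.normSq_apply]
    simp [z, ha', binForm]
    field_simp
    linear_combination (r:ℝ)^2 * h3 - (r:ℝ)^2 * hD
  have hnum : Complex.normSq ((p : ℂ) * z + q) = c' / a := by
    rw [Complex.normSq_apply]
    simp [z, hc', binForm]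
    field_simp
    linear_combination (p:ℝ)^2 * h3 - (p:ℝ)^2 * hD
  have hre : (((p : ℂ) * z + q) / ((r : ℂ) * z + s)).re = b' / (2 * a') := by
    rw [Complex.div_re, hden]
    simp [z]
    field_simp
    rw [hb']
    linear_combination (r:ℝ) * p * h3 - (r:ℝ) * p * hD
  have h1 : a' ≤ c' := by
    have := hg.1
    rw [hz, Complex.normSq_div, hden, hnum, div_div_div_cancel_right₀ ha.ne'] at this
    rwa [one_le_div ha'0] at this
  have h2 : |b'| ≤ a' := by
    have := hg.2
    rw [← UpperHalfPlane.coe_re, hz, hre, abs_div, abs_of_pos (show 0 < 2 * a' by positivity),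
      div_le_iff₀ (by positivity)] at this
    linarith
  rcases le_total 0 b' with hb | hb
  · exact ⟨s, q, r, p, Or.inl (by linarith), a', b', c', hb, by rwa [abs_of_nonneg hb] at h2, h1,
      ha'0, hD', hform⟩
  · refine ⟨s, -q, r, -p, Or.inr (by linarith), a', -b', c', by linarith,
      by rwa [abs_of_nonpos hb] at h2, h1, ha'0, by rw [neg_sq]; exact hD', fun x y => ?_⟩
    have := hform x (-y)
    push_cast
    convert this using 1
    · congr 1 <;> ring
    · unfold binForm; ring

/-! ### Theta series of a form -/

/-- `∑_{(m,n)} exp (-t Q(m,n))` for the form `Q` with coefficients `a, b, c`. -/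
noncomputable def formTheta (a b c t : ℝ) : ℝ :=
  ∑' k : ℤ × ℤ, Real.exp (-t * binForm a b c k.1 k.2)

lemma hasSum_geometric_abs {q : ℝ} (h0 : 0 ≤ q) (h1 : q < 1) :
    HasSum (fun n : ℤ => q ^ n.natAbs) ((1 + q) / (1 - q)) := by
  have hg := hasSum_geometric_of_lt_one h0 h1
  have h1' : HasSum (fun n : ℕ => q ^ (n + 1)) (q * (1 - q)⁻¹) := by
    simpa [pow_succ'] using hg.mul_left q
  have := HasSum.of_nat_of_neg_add_one (f := fun n : ℤ => q ^ n.natAbs) (by simpa using hg)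
    (m' := q * (1 - q)⁻¹) h1'
  convert this using 1
  have : 1 - q ≠ 0 := by linarith
  field_simp

lemma summable_gauss_shift {μ : ℝ} (hμ : 0 < μ) (x : ℝ) :
    Summable (fun n : ℤ => Real.exp (-μ * (n + x) ^ 2)) := by
  have hg := (hasSum_geometric_abs (q := Real.exp (-μ)) (Real.exp_pos _).le
    (by rw [Real.exp_lt_one_iff]; linarith)).summable
  refine Summable.of_nonneg_of_le (fun _ => (Real.exp_pos _).le) (fun n => ?_)
    (hg.mul_left (Real.exp (μ * (1 + |x|))))
  rw [← Real.exp_nat_mul, ← Real.exp_add, Real.exp_le_exp, Nat.cast_natAbs, Int.cast_abs]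
  have h1 : |(n : ℝ)| ≤ |n + x| + |x| := by
    simpa using abs_sub (n + x) x
  have h2 : |(n : ℝ) + x| ≤ (n + x) ^ 2 + 1 := by
    rw [← sq_abs]; nlinarith [sq_nonneg (|(n:ℝ) + x| - 1)]
  nlinarith

/-- A positive form dominates a multiple of `x² + y²`: its smallest eigenvalue is at least the
determinant divided by the trace. -/
lemma binForm_lower {a b c : ℝ} (x y : ℝ) :
    (a * c - b ^ 2 / 4) * (x ^ 2 + y ^ 2) ≤ (a + c) * binForm a b c x y := by
  unfold binForm
  nlinarith [sq_nonneg (a * x + b * y / 2), sq_nonneg (b * x / 2 + c * y)]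

lemma coeff_pos {a b c : ℝ} (ha : 0 < a) (hD : 4 * a * c - b ^ 2 = 3) : 0 < c := by
  by_contra h
  nlinarith [sq_nonneg b]

lemma summable_form_shift {a b c t : ℝ} (ha : 0 < a) (hD : 4 * a * c - b ^ 2 = 3) (ht : 0 < t)
    (x y : ℝ) :
    Summable (fun k : ℤ × ℤ => Real.exp (-t * binForm a b c (k.1 + x) (k.2 + y))) := by
  have hc := coeff_pos ha hD
  set μ := t * (3 / 4) / (a + c) with hμ
  have hμ0 : 0 < μ := by positivity
  have h := Summable.mul_of_nonneg (summable_gauss_shift hμ0 x) (summable_gauss_shift hμ0 y)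
    (fun _ => (Real.exp_pos _).le) (fun _ => (Real.exp_pos _).le)
  refine Summable.of_nonneg_of_le (fun _ => (Real.exp_pos _).le) (fun k => ?_) h
  rw [← Real.exp_add, Real.exp_le_exp]
  have h1 := binForm_lower (a := a) (b := b) (c := c) (k.1 + x) (k.2 + y)
  have h2 : a * c - b ^ 2 / 4 = 3 / 4 := by linarith
  rw [h2] at h1
  have h3 : 3 / 4 * (((k.1 : ℝ) + x) ^ 2 + (k.2 + y) ^ 2) / (a + c) ≤
      binForm a b c (k.1 + x) (k.2 + y) := by
    rw [div_le_iff₀ (by positivity)]; linarith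
  have h4 := mul_le_mul_of_nonneg_left h3 ht.le
  have h5 : -μ * (k.1 + x) ^ 2 + -μ * (k.2 + y) ^ 2 =
      -(t * (3 / 4 * (((k.1 : ℝ) + x) ^ 2 + (k.2 + y) ^ 2) / (a + c))) := by rw [hμ]; ring
  rw [h5]; linarith

lemma summable_form {a b c t : ℝ} (ha : 0 < a) (hD : 4 * a * c - b ^ 2 = 3) (ht : 0 < t) :
    Summable (fun k : ℤ × ℤ => Real.exp (-t * binForm a b c k.1 k.2)) := by
  simpa using summable_form_shift ha hD ht 0 0

/-- The linear automorphism of `ℤ²` with matrix `(p q; r s)`, for `p s - q r = ±1`. -/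
def intEquiv (p q r s : ℤ) (h : p * s - q * r = 1 ∨ p * s - q * r = -1) : ℤ × ℤ ≃ ℤ × ℤ where
  toFun k := (p * k.1 + q * k.2, r * k.1 + s * k.2)
  invFun k := ((p * s - q * r) * (s * k.1 - q * k.2), (p * s - q * r) * (p * k.2 - r * k.1))
  left_inv k := by
    have h2 : (p * s - q * r) ^ 2 = 1 := by rcases h with h | h <;> rw [h] <;> norm_num
    ext
    · simp only; linear_combination k.1 * h2
    · simp only; linear_combination k.2 * h2
  right_inv k := by
    have h2 : (p * s - q * r) ^ 2 = 1 := by rcases h with h | h <;> rw [h] <;> norm_num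
    ext
    · simp only; linear_combination k.1 * h2
    · simp only; linear_combination k.2 * h2

/-- The theta series of a form is invariant under integral equivalence. -/
lemma formTheta_congr {a b c a' b' c' t : ℝ} {p q r s : ℤ}
    (h : p * s - q * r = 1 ∨ p * s - q * r = -1)
    (hf : ∀ x y : ℝ, binForm a b c (p * x + q * y) (r * x + s * y) = binForm a' b' c' x y) :
    formTheta a b c t = formTheta a' b' c' t := by
  unfold formTheta
  rw [← (intEquiv p q r s h).tsum_eq]
  refine tsum_congr fun k => ?_
  rw [← hf]
  simp [intEquiv]

/-! ### Minimality for large parameters -/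

/-- Forms close to the hexagonal one. The map `(m, n) ↦ (-m-n, m)` has order three and preserves the
hexagonal form; averaging the theta series over it, each summand dominates the corresponding
summand of the hexagonal series by `three_exp_tau_le`. If `2a + 2c - b > 3`, the summand at `(1, 0)`
is strictly larger. -/
lemma near_bound {a b c t : ℝ} (ha : 0 < a) (hD : 4 * a * c - b ^ 2 = 3)
    (hκ : 2 * a + 2 * c - b ≤ 18 / 5) (ht : 18 / 5 ≤ t) :
    formTheta 1 1 1 t ≤ formTheta a b c t ∧
      (formTheta a b c t = formTheta 1 1 1 t → a = 1 ∧ b = 1 ∧ c = 1) := by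
  have hc := coeff_pos ha hD
  have ht0 : 0 < t := by linarith
  let g : ℤ × ℤ ≃ ℤ × ℤ := intEquiv (-1) (-1) 1 0 (Or.inl (by norm_num))
  set f : ℤ × ℤ → ℝ := fun k => Real.exp (-t * binForm a b c k.1 k.2) with hf
  have hfs : Summable f := summable_form ha hD ht0
  have hg1 : Summable (fun k => f (g k)) := hfs.comp_injective g.injective
  have hg2 : Summable (fun k => f (g (g k))) := hg1.comp_injective g.injective
  have e1 : ∑' k, f (g k) = ∑' k, f k := g.tsum_eq f
  have e2 : ∑' k, f (g (g k)) = ∑' k, f k := by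
    rw [g.tsum_eq (fun k => f (g k)), e1]
  have hsum : HasSum (fun k => (f k + f (g k) + f (g (g k))) / 3) (formTheta a b c t) := by
    have := ((hfs.hasSum.add hg1.hasSum).add hg2.hasSum).div_const 3
    rw [e1, e2] at this
    have hv : formTheta a b c t = (∑' k, f k + ∑' k, f k + ∑' k, f k) / 3 := by
      unfold formTheta; ring
    rw [hv]; exact this
  have hsum1 : HasSum (fun k : ℤ × ℤ => Real.exp (-t * binForm 1 1 1 k.1 k.2))
      (formTheta 1 1 1 t) := (summable_form one_pos (by norm_num) ht0).hasSum
  -- `κ` is the mean of the form over any orbit of `g`, relative to the hexagonal norm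
  set κ := (2 * a + 2 * c - b) / 3 with hκd
  have hκ1 : 1 ≤ κ := by
    -- `(2a+2c-b)² - 9 = (2a+2c-b)² - 3(4ac-b²) = 3(a-c)² + (a+c-2b)²`
    have : 3 ≤ 2 * a + 2 * c - b := by
      have h0 : 0 ≤ 2 * a + 2 * c - b := by
        nlinarith [sq_nonneg (a - c), sq_nonneg (a + c - b), sq_nonneg (a+c)]
      nlinarith [sq_nonneg (a - c), sq_nonneg (a + c - 2 * b)]
    rw [hκd]; linarith
  have hκ2 : κ ≤ 6 / 5 := by rw [hκd]; linarith
  have hg1v : ∀ k, f (g k) = Real.exp (-t * binForm a b c (-k.1 - k.2) k.1) := by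
    intro k; simp only [hf, g, intEquiv, Equiv.coe_fn_mk]; push_cast; congr 2; congr 1 <;> ring
  have hg2v : ∀ k, f (g (g k)) = Real.exp (-t * binForm a b c k.2 (-k.1 - k.2)) := by
    intro k; simp only [hf, g, intEquiv, Equiv.coe_fn_mk]; push_cast; congr 2; congr 1 <;> ring
  have hterm : ∀ k : ℤ × ℤ, Real.exp (-t * binForm 1 1 1 k.1 k.2) ≤
      (f k + f (g k) + f (g (g k))) / 3 := by
    intro k
    rcases eq_or_ne k 0 with rfl | hk
    · rw [hg1v, hg2v]; simp only [hf, binForm]; norm_num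
    set N : ℝ := binForm 1 1 1 k.1 k.2 with hN
    have hN1 : 1 ≤ N := by
      have : 1 ≤ k.1 ^ 2 + k.1 * k.2 + k.2 ^ 2 := by
        by_contra hlt
        have h0 : k.1 = 0 := by nlinarith [sq_nonneg (k.1 + 2 * k.2)]
        have h0' : k.2 = 0 := by nlinarith [sq_nonneg (2 * k.1 + k.2)]
        exact hk (Prod.ext h0 h0')
      rw [hN]; unfold binForm
      have h' : (1 : ℝ) ≤ (k.1 : ℝ) ^ 2 + k.1 * k.2 + k.2 ^ 2 := by exact_mod_cast this
      linarith
    have hN0 : N ≠ 0 := by linarith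
    have := three_exp_tau_le (κ := κ) (τ := t * N) (A := binForm a b c k.1 k.2 / N)
      (B := binForm a b c (-k.1 - k.2) k.1 / N) (C := binForm a b c k.2 (-k.1 - k.2) / N)
      (by nlinarith) hκ1 hκ2
      (by
        rw [← add_div, ← add_div, div_eq_iff hN0, hκd, hN]; unfold binForm; ring)
      (by
        rw [← add_div, ← add_div, div_pow, div_pow, div_pow, div_pow, ← add_div, ← add_div,
          mul_div_assoc', ← sub_div, div_eq_iff (by positivity), ← hD, hN]
        unfold binForm; ring)
    rw [hg1v, hg2v]
    simp only [hf]
    have e : ∀ z, -(t * N) * (z / N) = -t * z := by intro z; field_simp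
    rw [e, e, e, ← neg_mul] at this
    linarith
  refine ⟨hasSum_le hterm hsum1 hsum, fun heq => ?_⟩
  have hκe : κ = 1 := by
    by_contra hne
    have hlt : 1 < κ := lt_of_le_of_ne hκ1 (Ne.symm hne)
    have hs := three_exp_tau (κ := κ) (τ := t) (A := a) (B := a + -b + c) (C := c) ht hlt hκ2
      (by rw [hκd]; ring) (by rw [← hD]; ring)
    refine absurd heq.symm (ne_of_lt (hasSum_lt (i := ((1, 0) : ℤ × ℤ)) hterm ?_ hsum1 hsum))
    rw [hg1v, hg2v]
    simp only [hf, binForm]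
    norm_num at hs ⊢
    linarith
  have h3 : 2 * a + 2 * c - b = 3 := by rw [hκd] at hκe; linarith
  have hz : (a - c) ^ 2 * 3 + (a + c - 2 * b) ^ 2 = 0 := by
    have : b = 2 * a + 2 * c - 3 := by linarith
    subst this
    nlinarith
  have hac : a = c := by nlinarith [sq_nonneg (a - c), sq_nonneg (a + c - 2 * b)]
  have hb : a + c = 2 * b := by nlinarith [sq_nonneg (a - c), sq_nonneg (a + c - 2 * b)]
  refine ⟨by linarith, by linarith, by linarith⟩

lemma hex_aux {m j : ℤ} (hm : 0 ≤ m) (hj : 0 ≤ j) (h : ¬(m = 1 ∧ j = 1)) :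
    m + j ≤ m ^ 2 - m * j + j ^ 2 := by
  rcases hm.eq_or_lt with rfl | hm
  · nlinarith [Int.le_self_sq j]
  rcases hj.eq_or_lt with rfl | hj
  · nlinarith [Int.le_self_sq m]
  rcases eq_or_ne m 1 with rfl | h1
  · have : 2 ≤ j := by omega
    nlinarith
  rcases eq_or_ne j 1 with rfl | h2
  · have : 2 ≤ m := by omega
    nlinarith
  have h1 : 2 ≤ m := by omega
  have h2 : 2 ≤ j := by omega
  nlinarith [sq_nonneg (m - j), mul_nonneg (sub_nonneg.2 h1) (sub_nonneg.2 h2)]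

/-- Away from the two short vectors `±(1, -1)`, the hexagonal norm dominates the `ℓ¹` norm; this
compares the hexagonal theta series with a product of geometric series. -/
lemma hex_norm_lower (k : ℤ × ℤ) (h1 : k ≠ (1, -1)) (h2 : k ≠ (-1, 1)) :
    ((k.1.natAbs + k.2.natAbs : ℕ) : ℤ) ≤ k.1 ^ 2 + k.1 * k.2 + k.2 ^ 2 := by
  obtain ⟨m, n⟩ := k
  simp only [ne_eq, Prod.mk.injEq] at *
  push_cast
  rcases abs_cases m with ⟨e1, g1⟩ | ⟨e1, g1⟩ <;> rcases abs_cases n with ⟨e2, g2⟩ | ⟨e2, g2⟩ <;>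
    rw [e1, e2]
  · nlinarith [mul_nonneg g1 g2, Int.le_self_sq m, Int.le_self_sq n]
  · have := hex_aux (m := m) (j := -n) g1 (by omega) (by omega)
    nlinarith
  · have := hex_aux (m := -m) (j := n) (by omega) g2 (by omega)
    nlinarith
  · nlinarith [mul_pos (neg_pos.2 g1) (neg_pos.2 g2), Int.le_self_sq (-m), Int.le_self_sq (-n)]

lemma hex_term_upper {t : ℝ} (ht : 0 < t) (k : ℤ × ℤ) :
    Real.exp (-t * binForm 1 1 1 k.1 k.2) ≤
      Real.exp (-t) ^ k.1.natAbs * Real.exp (-t) ^ k.2.natAbs +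
        (if k = (1, -1) then Real.exp (-t) else 0) +
        (if k = (-1, 1) then Real.exp (-t) else 0) := by
  have hq0 := Real.exp_pos (-t)
  by_cases h1 : k = (1, -1)
  · have h2 : k ≠ (-1, 1) := by rw [h1]; decide
    rw [if_pos h1, if_neg h2, h1]
    have e : -t * binForm 1 1 1 ((1 : ℤ) : ℝ) ((-1 : ℤ) : ℝ) = -t := by
      unfold binForm; push_cast; ring
    rw [e]
    linarith [mul_pos (pow_pos hq0 (1 : ℤ).natAbs) (pow_pos hq0 (-1 : ℤ).natAbs)]
  by_cases h2 : k = (-1, 1)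
  · rw [if_neg h1, if_pos h2, h2]
    have e : -t * binForm 1 1 1 ((-1 : ℤ) : ℝ) ((1 : ℤ) : ℝ) = -t := by
      unfold binForm; push_cast; ring
    rw [e]
    linarith [mul_pos (pow_pos hq0 (-1 : ℤ).natAbs) (pow_pos hq0 (1 : ℤ).natAbs)]
  rw [if_neg h1, if_neg h2, add_zero, add_zero, ← pow_add, ← Real.exp_nat_mul,
    Real.exp_le_exp]
  have h := hex_norm_lower k h1 h2
  have h' : ((k.1.natAbs + k.2.natAbs : ℕ) : ℝ) ≤ (k.1 : ℝ) ^ 2 + k.1 * k.2 + k.2 ^ 2 := by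
    have h'' := (Int.cast_le (R := ℝ)).2 h
    rw [Int.cast_natCast] at h''
    simpa only [Int.cast_add, Int.cast_mul, Int.cast_pow] using h''
  unfold binForm
  nlinarith

lemma hasSum_mul_self {f : ℤ → ℝ} {s : ℝ} (hf : HasSum f s) (h0 : ∀ n, 0 ≤ f n) :
    HasSum (fun k : ℤ × ℤ => f k.1 * f k.2) (s * s) :=
  hf.mul hf (Summable.mul_of_nonneg hf.summable hf.summable h0 h0)

lemma hex_theta_upper {t : ℝ} (ht : 0 < t) :
    formTheta 1 1 1 t ≤ ((1 + Real.exp (-t)) / (1 - Real.exp (-t))) ^ 2 + 2 * Real.exp (-t) := by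
  set q := Real.exp (-t) with hq
  have hq0 : 0 < q := Real.exp_pos _
  have hq1 : q < 1 := by rw [hq, Real.exp_lt_one_iff]; linarith
  have hg := hasSum_geometric_abs hq0.le hq1
  have hprod := hasSum_mul_self hg (fun n => by positivity)
  have hA : HasSum (fun k : ℤ × ℤ => if k = (1, -1) then q else 0) q := hasSum_ite_eq _ _
  have hB : HasSum (fun k : ℤ × ℤ => if k = (-1, 1) then q else 0) q := hasSum_ite_eq _ _
  have hs : Summable (fun k : ℤ × ℤ => Real.exp (-t * binForm 1 1 1 k.1 k.2)) :=
    summable_form one_pos (by norm_num) ht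
  have hle := hasSum_le (hex_term_upper ht) hs.hasSum
    ((hprod.add hA).add hB)
  unfold formTheta
  linarith [sq ((1 + q) / (1 - q))]

/-- Reduced forms far from the hexagonal one have a short vector: `a ≤ 33/50`. The three terms at
`0` and `±(1, 0)` alone then exceed the whole hexagonal theta series. -/
lemma far_bound {a b c t : ℝ} (ha : 0 < a) (hb : 0 ≤ b) (hba : b ≤ a) (hac : a ≤ c)
    (hD : 4 * a * c - b ^ 2 = 3) (hκ : 18 / 5 < 2 * a + 2 * c - b) (ht : 18 / 5 ≤ t) :
    formTheta 1 1 1 t < formTheta a b c t := by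
  have ha1 : a ≤ 1 := by nlinarith
  -- as `b² / (2a) ≤ b`, the hypothesis `hκ` yields `2a + 3/(2a) > 18/5`
  have ha2 : a ≤ 33 / 50 := by
    by_contra h
    push Not at h
    have : 0 < 4 * a ^ 2 - 36 / 5 * a + 3 := by nlinarith
    nlinarith
  have ht0 : 0 < t := by linarith
  set q := Real.exp (-t) with hq
  have hq0 : 0 < q := Real.exp_pos _
  have hq1 : q ≤ 1 / 33 := by
    have h1 : q ≤ Real.exp (-(18/5)) := by rw [hq, Real.exp_le_exp]; linarith
    have h2 : (33 : ℝ) ≤ Real.exp (18 / 5) := by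
      have := Real.sum_le_exp_of_nonneg (x := 18/5) (by norm_num) 9
      norm_num [Finset.sum_range_succ, Nat.factorial] at this
      linarith
    rw [Real.exp_neg] at h1
    have h3 := inv_anti₀ (by norm_num) h2
    linarith
  have hlow : 1 + 2 * (q * (33 / 10)) ≤ formTheta a b c t := by
    have h1 := (summable_form ha hD ht0).sum_le_tsum ({(0, 0), (1, 0), (-1, 0)} : Finset (ℤ × ℤ))
      (fun _ _ => (Real.exp_pos _).le)
    rw [Finset.sum_insert (by decide), Finset.sum_insert (by decide), Finset.sum_singleton] at h1
    norm_num [binForm] at h1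
    have h2 : q * (33 / 10) ≤ Real.exp (-(t * a)) := by
      have h3 : (33 / 10 : ℝ) ≤ Real.exp (t - t * a) := by
        -- `153/125 = 18/5 · (1 - 33/50)`
        have h4 : Real.exp (153 / 125) ≤ Real.exp (t - t * a) := by
          rw [Real.exp_le_exp]; nlinarith
        have := Real.sum_le_exp_of_nonneg (x := 153/125) (by norm_num) 6
        norm_num [Finset.sum_range_succ, Nat.factorial] at this
        linarith
      calc q * (33 / 10) ≤ q * Real.exp (t - t * a) := by gcongr
        _ = Real.exp (-(t * a)) := by rw [hq, ← Real.exp_add]; congr 1; ring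
    unfold formTheta binForm
    norm_num
    linarith
  have hup := hex_theta_upper ht0
  rw [← hq] at hup
  have h5 : ((1 + q) / (1 - q)) ^ 2 < 1 + 4.6 * q := by
    have h6 : 9 / 10 ≤ (1 - q) ^ 2 := by nlinarith
    rw [div_pow, div_lt_iff₀ (by linarith)]
    nlinarith [mul_le_mul_of_nonneg_left h6 hq0.le]
  linarith

/-- Minimality of the hexagonal form in the range `t ≥ 18/5`. -/
lemma form_min_large {a b c t : ℝ} (ha : 0 < a) (hD : 4 * a * c - b ^ 2 = 3) (ht : 18 / 5 ≤ t) :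
    formTheta 1 1 1 t ≤ formTheta a b c t ∧
      (formTheta a b c t = formTheta 1 1 1 t → ∃ p q r s : ℤ,
        (p * s - q * r = 1 ∨ p * s - q * r = -1) ∧
        ∀ x y : ℝ, binForm a b c (p * x + q * y) (r * x + s * y) = binForm 1 1 1 x y) := by
  obtain ⟨p, q, r, s, hdet, a', b', c', hb, hba, hac, ha', hD', hf⟩ := exists_reduced ha hD
  rw [formTheta_congr hdet hf]
  rcases le_or_gt (2 * a' + 2 * c' - b') (18 / 5) with hκ | hκ
  · obtain ⟨h1, h2⟩ := near_bound ha' hD' hκ ht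
    refine ⟨h1, fun h => ⟨p, q, r, s, hdet, ?_⟩⟩
    obtain ⟨rfl, rfl, rfl⟩ := h2 h
    exact hf
  · have h := far_bound ha' hb hba hac hD' hκ ht
    exact ⟨h.le, fun h' => absurd h'.symm h.ne⟩

/-! ### Poisson summation and the functional equation -/

open Complex in
/-- One-dimensional Poisson summation for a Gaussian with a shift `z` and a frequency `ξ`. -/
lemma poisson_one {a : ℝ} (ha : 0 < a) (z ξ : ℝ) :
    ∑' n : ℤ, cexp (-Real.pi * a * (n + z) ^ 2 + 2 * Real.pi * I * ξ * (n + z)) =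
      ((√a)⁻¹ : ℝ) * ∑' l : ℤ, cexp (-Real.pi * (l - ξ) ^ 2 / a + 2 * Real.pi * I * l * z) := by
  have ha' : (a : ℂ) ≠ 0 := by exact_mod_cast ha.ne'
  have h := Complex.tsum_exp_neg_quadratic (a := a) (by simpa using ha) (-a * z + I * ξ)
  have hs : 1 / (a : ℂ) ^ (1 / 2 : ℂ) = ((√a)⁻¹ : ℝ) := by
    rw [Real.sqrt_eq_rpow, ofReal_inv, ofReal_cpow ha.le, one_div]
    norm_num
  rw [hs] at h
  set w : ℂ := cexp (-Real.pi * a * z ^ 2 + 2 * Real.pi * I * ξ * z) with hw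
  calc _ = w * ∑' n : ℤ, cexp (-Real.pi * a * n ^ 2 + 2 * Real.pi * (-a * z + I * ξ) * n) := by
        rw [← tsum_mul_left]
        refine tsum_congr fun n => ?_
        rw [hw, ← Complex.exp_add]; congr 1; ring
    _ = _ := by
        rw [h, mul_left_comm, ← tsum_mul_left]
        congr 1
        refine tsum_congr fun n => ?_
        rw [hw, ← Complex.exp_add]; congr 1
        field_simp
        ring_nf
        simp only [I_sq, I_pow_three, I_pow_four]
        ring

open Complex in
/-- Two-dimensional Poisson summation for a form of discriminant `-3`, by summing over one
variable at a time after completing the square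
`a x² + b x y + c y² = c (y + b x / (2c))² + 3 x² / (4c)`. The dual form is `c x² - b x y + a y²`
up to the factor `4/3`. -/
lemma poisson_two {a b c α : ℝ} (ha : 0 < a) (hD : 4 * a * c - b ^ 2 = 3) (hα : 0 < α)
    (x y : ℝ) :
    ∑' k : ℤ × ℤ, cexp (((-(Real.pi * α) * binForm a b c (k.1 + x) (k.2 + y) : ℝ) : ℂ)) =
      ((2 / (√3 * α) : ℝ) : ℂ) * ∑' k : ℤ × ℤ,
        cexp (((-(Real.pi * (4 / (3 * α))) * binForm c (-b) a k.1 k.2 : ℝ) : ℂ) +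
          ((2 * Real.pi * (k.1 * x + k.2 * y) : ℝ) : ℂ) * I) := by
  have hc := coeff_pos ha hD
  have hcC : (c : ℂ) ≠ 0 := by exact_mod_cast hc.ne'
  have hαC : (α : ℂ) ≠ 0 := by exact_mod_cast hα.ne'
  have hDC : 4 * (a : ℂ) * c - b ^ 2 = 3 := by exact_mod_cast congrArg (fun r : ℝ => (r : ℂ)) hD
  have hpi := Real.pi_pos
  -- the partially transformed summand
  set F : ℤ → ℤ → ℂ := fun m j => cexp (-Real.pi * (3 * α / (4 * c) : ℝ) * (m + x) ^ 2 +
    (-Real.pi * j ^ 2 / (α * c : ℝ) + 2 * Real.pi * I * j * (y + b / (2 * c) * (m + x)))) with hF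
  set G : ℤ → ℤ → ℂ := fun l j =>
    cexp (((-(Real.pi * (4 / (3 * α))) * binForm c (-b) a l j : ℝ) : ℂ) +
          ((2 * Real.pi * (l * x + j * y) : ℝ) : ℂ) * I) with hG
  have hFs : Summable (Function.uncurry F) := by
    rw [← summable_norm_iff]
    have h1 := summable_gauss_shift (μ := Real.pi * (3 * α / (4 * c))) (by positivity) x
    have h2 := summable_gauss_shift (μ := Real.pi / (α * c)) (by positivity) 0
    refine (Summable.mul_of_nonneg h1 h2 (fun _ => (Real.exp_pos _).le)
      (fun _ => (Real.exp_pos _).le)).congr fun k => ?_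
    rw [← Real.exp_add]
    simp only [Function.uncurry, hF, Complex.norm_exp]
    congr 1
    have : (-Real.pi * (3 * α / (4 * c) : ℝ) * (k.1 + x) ^ 2 +
      (-Real.pi * k.2 ^ 2 / (α * c : ℝ) + 2 * Real.pi * I * k.2 * (y + b / (2 * c) * (k.1 + x))) : ℂ)
      = ((-(Real.pi * (3 * α / (4 * c))) * (k.1 + x) ^ 2 + -(Real.pi / (α * c)) * (k.2 + 0) ^ 2 : ℝ) : ℂ)
        + ((2 * Real.pi * k.2 * (y + b / (2 * c) * (k.1 + x)) : ℝ) : ℂ) * I := by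
      push_cast; ring
    rw [this, add_re, ofReal_re, re_ofReal_mul, I_re, mul_zero]
    ring
  have hGs : Summable (Function.uncurry G) := by
    rw [← summable_norm_iff]
    refine (summable_form (a := c) (b := -b) (c := a) (t := Real.pi * (4 / (3 * α))) hc
      (by linarith) (by positivity)).congr fun k => ?_
    simp only [Function.uncurry, hG, Complex.norm_exp]
    rw [add_re, ofReal_re, re_ofReal_mul, I_re, mul_zero, add_zero]
  have hLs : Summable (fun k : ℤ × ℤ =>
      cexp (((-(Real.pi * α) * binForm a b c (k.1 + x) (k.2 + y) : ℝ) : ℂ))) := by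
    rw [← summable_norm_iff]
    refine (summable_form_shift ha hD (t := Real.pi * α) (by positivity) x y).congr fun k => ?_
    rw [Complex.norm_exp, ofReal_re]
  have step1 : ∀ m : ℤ, ∑' n : ℤ,
      cexp (((-(Real.pi * α) * binForm a b c (m + x) (n + y) : ℝ) : ℂ)) =
      ((√(α * c))⁻¹ : ℝ) * ∑' j : ℤ, F m j := by
    intro m
    have h := poisson_one (a := α * c) (by positivity) (y + b / (2 * c) * (m + x)) 0
    calc _ = cexp (-Real.pi * (3 * α / (4 * c) : ℝ) * (m + x) ^ 2) * ∑' n : ℤ,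
          cexp (-Real.pi * (α * c : ℝ) * (n + (y + b / (2 * c) * (m + x) : ℝ)) ^ 2 +
            2 * Real.pi * I * (0 : ℝ) * (n + (y + b / (2 * c) * (m + x) : ℝ))) := by
          rw [← tsum_mul_left]
          refine tsum_congr fun n => ?_
          rw [← Complex.exp_add]; congr 1
          unfold binForm
          push_cast
          field_simp
          linear_combination (-4 * (α : ℂ) * ((m : ℂ) + x) ^ 2) * hDC
      _ = _ := by
          rw [h, mul_left_comm, ← tsum_mul_left]
          congr 1
          refine tsum_congr fun n => ?_
          rw [hF, ← Complex.exp_add]; congr 1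
          push_cast
          ring
  have step2 : ∀ j : ℤ, ∑' m : ℤ, F m j =
      ((√(3 * α / (4 * c)))⁻¹ : ℝ) * ∑' l : ℤ, G l j := by
    intro j
    have h := poisson_one (a := 3 * α / (4 * c)) (by positivity) x (j * b / (2 * c))
    calc _ = cexp (-Real.pi * j ^ 2 / (α * c : ℝ) + 2 * Real.pi * I * j * y) * ∑' m : ℤ,
          cexp (-Real.pi * (3 * α / (4 * c) : ℝ) * (m + x) ^ 2 +
            2 * Real.pi * I * (j * b / (2 * c) : ℝ) * (m + x)) := by
          rw [← tsum_mul_left]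
          refine tsum_congr fun n => ?_
          simp only [hF]
          rw [← Complex.exp_add]; congr 1
          push_cast
          ring
      _ = _ := by
          rw [h, mul_left_comm, ← tsum_mul_left]
          congr 1
          refine tsum_congr fun n => ?_
          rw [hG, ← Complex.exp_add]; congr 1
          unfold binForm
          push_cast
          field_simp
          linear_combination 4 * (j : ℂ) ^ 2 * hDC
  have hconst : (√(α * c))⁻¹ * (√(3 * α / (4 * c)))⁻¹ = 2 / (√3 * α) := by
    rw [← mul_inv, ← Real.sqrt_mul (by positivity)]
    have : α * c * (3 * α / (4 * c)) = 3 * (α / 2) ^ 2 := by field_simp; ring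
    rw [this, Real.sqrt_mul (by norm_num), Real.sqrt_sq (by positivity)]
    field_simp
  rw [hLs.tsum_prod]
  simp_rw [step1]
  rw [tsum_mul_left, ← hFs.tsum_comm]
  simp_rw [step2]
  rw [tsum_mul_left, hGs.tsum_comm, ← mul_assoc, ← ofReal_mul, hconst]
  congr 1
  exact (hGs.tsum_prod).symm

/-- Real form of Poisson summation: a translation becomes a cosine weight on the dual side. -/
lemma theta_shift_dual {a b c α : ℝ} (ha : 0 < a) (hD : 4 * a * c - b ^ 2 = 3) (hα : 0 < α)
    (x y : ℝ) :
    ∑' k : ℤ × ℤ, Real.exp (-(Real.pi * α) * binForm a b c (k.1 + x) (k.2 + y)) =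
      2 / (√3 * α) * ∑' k : ℤ × ℤ,
        Real.exp (-(Real.pi * (4 / (3 * α))) * binForm c (-b) a k.1 k.2) *
          Real.cos (2 * Real.pi * (k.1 * x + k.2 * y)) := by
  have hc := coeff_pos ha hD
  have hpi := Real.pi_pos
  have h := congrArg Complex.re (poisson_two ha hD hα x y)
  have hs : Summable (fun k : ℤ × ℤ =>
      Complex.exp (((-(Real.pi * (4 / (3 * α))) * binForm c (-b) a k.1 k.2 : ℝ) : ℂ) +
          ((2 * Real.pi * (k.1 * x + k.2 * y) : ℝ) : ℂ) * Complex.I)) := by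
    rw [← summable_norm_iff]
    refine (summable_form (a := c) (b := -b) (c := a) (t := Real.pi * (4 / (3 * α))) hc
      (by linarith) (by positivity)).congr fun k => ?_
    rw [Complex.norm_exp, Complex.add_re, Complex.ofReal_re, Complex.re_ofReal_mul, Complex.I_re,
      mul_zero, add_zero]
  rw [Complex.re_ofReal_mul, Complex.re_tsum hs] at h
  simp_rw [← Complex.ofReal_exp] at h
  rw [← Complex.ofReal_tsum, Complex.ofReal_re] at h
  rw [h]
  congr 1
  refine tsum_congr fun k => ?_
  rw [Complex.exp_re, Complex.add_re, Complex.add_im, Complex.ofReal_re, Complex.ofReal_im,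
    Complex.re_ofReal_mul, Complex.im_ofReal_mul, Complex.I_re, Complex.I_im]
  simp

/-- Rotation by a quarter turn: up to scaling, a binary form is equivalent to its dual. -/
lemma formTheta_swap (a b c t : ℝ) : formTheta c (-b) a t = formTheta a b c t := by
  refine (formTheta_congr (p := 0) (q := -1) (r := 1) (s := 0) (Or.inl (by norm_num)) ?_).symm
  intro x y
  unfold binForm
  push_cast
  ring

/-- Functional equation of the theta series of a form of discriminant `-3`, with fixed point
`α = 2/√3`. -/
lemma formTheta_dual {a b c α : ℝ} (ha : 0 < a) (hD : 4 * a * c - b ^ 2 = 3) (hα : 0 < α) :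
    formTheta a b c (Real.pi * α) =
      2 / (√3 * α) * formTheta a b c (Real.pi * (4 / (3 * α))) := by
  have h := theta_shift_dual ha hD hα 0 0
  rw [← formTheta_swap a b c (Real.pi * (4 / (3 * α)))]
  simpa [formTheta] using h

/-! ### Minimality for all parameters, and translations -/

/-- Minimality of the hexagonal form among forms of discriminant `-3`, for every `α > 0`. The
functional equation reduces to `α ≥ 2/√3`, where `π α ≥ 18/5`. -/
lemma form_min {a b c α : ℝ} (ha : 0 < a) (hD : 4 * a * c - b ^ 2 = 3) (hα : 0 < α) :
    formTheta 1 1 1 (Real.pi * α) ≤ formTheta a b c (Real.pi * α) ∧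
      (formTheta a b c (Real.pi * α) = formTheta 1 1 1 (Real.pi * α) → ∃ p q r s : ℤ,
        (p * s - q * r = 1 ∨ p * s - q * r = -1) ∧
        ∀ x y : ℝ, binForm a b c (p * x + q * y) (r * x + s * y) = binForm 1 1 1 x y) := by
  have hbig : ∀ β : ℝ, 0 < β → 4 / 3 ≤ β ^ 2 → 18 / 5 ≤ Real.pi * β := by
    intro β hβ h
    have h1 : 23 / 20 ≤ β := by nlinarith
    nlinarith [Real.pi_gt_d2]
  rcases le_total (4 / 3) (α ^ 2) with h | h
  · exact form_min_large ha hD (hbig α hα h)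
  · have hβ : 4 / 3 ≤ (4 / (3 * α)) ^ 2 := by
      rw [div_pow, le_div_iff₀ (by positivity)]
      nlinarith
    have hK : 0 < 2 / (√3 * α) := by positivity
    have hm := form_min_large ha hD (hbig _ (by positivity) hβ)
    rw [formTheta_dual ha hD hα, formTheta_dual one_pos (by norm_num) hα]
    refine ⟨mul_le_mul_of_nonneg_left hm.1 hK.le, fun he => hm.2 ?_⟩
    exact mul_left_cancel₀ hK.ne' he

/-- Translating `A₂` never increases its theta series: on the dual side each term is multiplied by a
cosine.
Equality makes the cosines at the dual vectors `(1, 0)` and `(0, 1)` equal to one. -/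
lemma hex_shift {α : ℝ} (hα : 0 < α) (x y : ℝ) :
    ∑' k : ℤ × ℤ, Real.exp (-(Real.pi * α) * binForm 1 1 1 (k.1 + x) (k.2 + y)) ≤
        formTheta 1 1 1 (Real.pi * α) ∧
      (∑' k : ℤ × ℤ, Real.exp (-(Real.pi * α) * binForm 1 1 1 (k.1 + x) (k.2 + y)) =
        formTheta 1 1 1 (Real.pi * α) → (∃ m : ℤ, x = m) ∧ ∃ n : ℤ, y = n) := by
  have hpi := Real.pi_pos
  set f : ℤ × ℤ → ℝ := fun k =>
    Real.exp (-(Real.pi * (4 / (3 * α))) * binForm 1 (-1) 1 k.1 k.2) with hf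
  have hfs : Summable f := summable_form one_pos (by norm_num) (by positivity)
  have hle : ∀ k : ℤ × ℤ, f k * Real.cos (2 * Real.pi * (k.1 * x + k.2 * y)) ≤ f k := fun k =>
    mul_le_of_le_one_right (Real.exp_pos _).le (Real.cos_le_one _)
  have hgs : Summable (fun k : ℤ × ℤ => f k * Real.cos (2 * Real.pi * (k.1 * x + k.2 * y))) := by
    refine Summable.of_norm_bounded hfs fun k => ?_
    rw [norm_mul, Real.norm_of_nonneg (Real.exp_pos _).le]
    exact mul_le_of_le_one_right (Real.exp_pos _).le (Real.abs_cos_le_one _)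
  have hK : 0 < 2 / (√3 * α) := by positivity
  rw [theta_shift_dual one_pos (by norm_num) hα, formTheta_dual one_pos (by norm_num) hα,
    ← formTheta_swap]
  refine ⟨mul_le_mul_of_nonneg_left (hgs.tsum_le_tsum hle hfs) hK.le, fun he => ?_⟩
  have he' : ∑' k : ℤ × ℤ, f k * Real.cos (2 * Real.pi * (k.1 * x + k.2 * y)) = ∑' k, f k :=
    mul_left_cancel₀ hK.ne' he
  have hcos : ∀ k : ℤ × ℤ, Real.cos (2 * Real.pi * (k.1 * x + k.2 * y)) = 1 := by
    intro k
    by_contra hne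
    have hlt := lt_of_le_of_ne (Real.cos_le_one _) hne
    refine (hgs.tsum_lt_tsum hle (i := k) ?_ hfs).ne he'
    exact mul_lt_of_lt_one_right (Real.exp_pos _) hlt
  have hint : ∀ z : ℝ, Real.cos (2 * Real.pi * z) = 1 → ∃ m : ℤ, z = m := by
    intro z hz
    obtain ⟨m, hm⟩ := (Real.cos_eq_one_iff _).1 hz
    refine ⟨m, ?_⟩
    have : (2 * Real.pi) * z = (2 * Real.pi) * m := by linarith
    exact mul_left_cancel₀ (by positivity) this
  refine ⟨hint x ?_, hint y ?_⟩
  · simpa using hcos (1, 0)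
  · simpa using hcos (0, 1)

/-! ### From forms to lattices -/

/-- The theta series of `Mℤ²` is that of the Gram form of `M`. -/
lemma latTheta_eq_formTheta (M : Matrix (Fin 2) (Fin 2) ℝ) (α : ℝ) :
    latTheta 2 M 0 α = formTheta (M 0 0 ^ 2 + M 1 0 ^ 2) (2 * (M 0 0 * M 0 1 + M 1 0 * M 1 1))
      (M 0 1 ^ 2 + M 1 1 ^ 2) (Real.pi * α) := by
  unfold latTheta formTheta
  rw [← (finTwoArrowEquiv ℤ).symm.tsum_eq]
  refine tsum_congr fun k => ?_
  congr 1
  simp [Matrix.mulVec, dotProduct, Fin.sum_univ_two, binForm]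
  left
  ring

lemma latTheta_hex (x y α : ℝ) :
    latTheta 2 A2mat (A2mat.mulVec ![x, y]) α =
      ∑' k : ℤ × ℤ, Real.exp (-(Real.pi * α) * binForm 1 1 1 (k.1 + x) (k.2 + y)) := by
  have h3 : √3 ^ 2 = 3 := Real.sq_sqrt (by norm_num)
  unfold latTheta
  rw [← (finTwoArrowEquiv ℤ).symm.tsum_eq]
  refine tsum_congr fun k => ?_
  congr 1
  simp [A2mat, Matrix.mulVec, dotProduct, Fin.sum_univ_two, binForm]
  left
  linear_combination ((k.2 + y) ^ 2 / 4) * h3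

lemma latTheta_hex_zero (α : ℝ) : latTheta 2 A2mat 0 α = formTheta 1 1 1 (Real.pi * α) := by
  have h := latTheta_hex 0 0 α
  have h0 : A2mat.mulVec ![0, 0] = 0 := by simp
  rw [h0] at h
  simpa [formTheta] using h

lemma exists_hex_coords (u : Fin 2 → ℝ) : ∃ x y : ℝ, u = A2mat.mulVec ![x, y] := by
  have h3 : 0 < √3 := by positivity
  refine ⟨u 0 - u 1 / √3, 2 * u 1 / √3, ?_⟩
  ext i
  fin_cases i
  · simp [A2mat, Matrix.mulVec, dotProduct, Fin.sum_univ_two]; ring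
  · simp [A2mat, Matrix.mulVec, dotProduct, Fin.sum_univ_two]

/-- The theta series without translation depends only on the lattice, not on the basis. -/
lemma latTheta_eq_tsum_lattice (M : Matrix (Fin 2) (Fin 2) ℝ) (hM : M.det ≠ 0) (α : ℝ) :
    latTheta 2 M 0 α =
      ∑' v : {v : Fin 2 → ℝ | ∃ k : Fin 2 → ℤ, v = M.mulVec (fun j => (k j : ℝ))},
        Real.exp (-Real.pi * α * ∑ i, ((v : Fin 2 → ℝ) i) ^ 2) := by
  have hinj : Function.Injective (fun k : Fin 2 → ℤ => M.mulVec (fun j => (k j : ℝ))) := by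
    intro k k' h
    have hu : IsUnit M := (Matrix.isUnit_iff_isUnit_det M).2 (isUnit_iff_ne_zero.2 hM)
    have := Matrix.mulVec_injective_of_isUnit hu h
    ext j
    exact_mod_cast congrFun this j
  have hset : {v : Fin 2 → ℝ | ∃ k : Fin 2 → ℤ, v = M.mulVec (fun j => (k j : ℝ))} =
      Set.range (fun k : Fin 2 → ℤ => M.mulVec (fun j => (k j : ℝ))) := by
    ext v; simp [eq_comm]
  rw [hset, tsum_range (fun v : Fin 2 → ℝ => Real.exp (-Real.pi * α * ∑ i, (v i) ^ 2)) hinj]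
  simp [latTheta]

lemma latTheta_rotate {R N : Matrix (Fin 2) (Fin 2) ℝ} (hR : R.transpose * R = 1) (α : ℝ) :
    latTheta 2 (R * N) 0 α = latTheta 2 N 0 α := by
  have hv : ∀ v : Fin 2 → ℝ, ∑ i, (R.mulVec v i) ^ 2 = ∑ i, (v i) ^ 2 := by
    intro v
    have h : ∀ w : Fin 2 → ℝ, ∑ i, (w i) ^ 2 = dotProduct w w := by
      intro w; simp [dotProduct, sq]
    rw [h, h, Matrix.dotProduct_mulVec, ← Matrix.mulVec_transpose, Matrix.mulVec_mulVec, hR,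
      Matrix.one_mulVec]
  unfold latTheta
  refine tsum_congr fun k => ?_
  simp only [Pi.zero_apply, add_zero]
  rw [← Matrix.mulVec_mulVec, hv]

/-- A lattice whose form is integrally equivalent to the hexagonal form is a rotated `A₂`: if the
chosen basis is negatively oriented, its two vectors are exchanged first. -/
lemma exists_rotation (M : Matrix (Fin 2) (Fin 2) ℝ) (hM : |M.det| = √3 / 2)
    (h : ∃ p q r s : ℤ, (p * s - q * r = 1 ∨ p * s - q * r = -1) ∧
      ∀ x y : ℝ, binForm (M 0 0 ^ 2 + M 1 0 ^ 2) (2 * (M 0 0 * M 0 1 + M 1 0 * M 1 1))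
        (M 0 1 ^ 2 + M 1 1 ^ 2) (p * x + q * y) (r * x + s * y) = binForm 1 1 1 x y) :
    ∃ R : Matrix (Fin 2) (Fin 2) ℝ, R.transpose * R = 1 ∧ R.det = 1 ∧
      {v : Fin 2 → ℝ | ∃ k : Fin 2 → ℤ, v = M.mulVec (fun j => (k j : ℝ))}
        = {v : Fin 2 → ℝ | ∃ k : Fin 2 → ℤ, v = (R * A2mat).mulVec (fun j => (k j : ℝ))} := by
  have h' : ∃ p q r s : ℤ, (p * s - q * r = 1 ∨ p * s - q * r = -1) ∧
      M.det * (p * s - q * r) = √3 / 2 ∧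
      ∀ x y : ℝ, binForm (M 0 0 ^ 2 + M 1 0 ^ 2) (2 * (M 0 0 * M 0 1 + M 1 0 * M 1 1))
        (M 0 1 ^ 2 + M 1 1 ^ 2) (p * x + q * y) (r * x + s * y) = binForm 1 1 1 x y := by
    obtain ⟨p, q, r, s, hd, hf⟩ := h
    have hdR : (p : ℝ) * s - q * r = 1 ∨ (p : ℝ) * s - q * r = -1 := by exact_mod_cast hd
    have hcase : M.det * (p * s - q * r) = √3 / 2 ∨ M.det * (p * s - q * r) = -(√3 / 2) := by
      apply eq_or_eq_neg_of_abs_eq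
      rw [abs_mul, hM]
      rcases hdR with e | e <;> rw [e] <;> simp
    rcases hcase with e | e
    · exact ⟨p, q, r, s, hd, e, hf⟩
    · refine ⟨q, p, s, r, by omega, by linarith, fun x y => ?_⟩
      rw [add_comm ((q : ℝ) * x), add_comm ((s : ℝ) * x), hf]
      unfold binForm; ring
  obtain ⟨p, q, r, s, hd, hdet, hf⟩ := h'
  rw [Matrix.det_fin_two] at hdet
  -- the new basis `n₁ = (e, f)`, `n₂ = (g, h)`
  obtain ⟨e, he⟩ : ∃ e, e = M 0 0 * p + M 0 1 * r := ⟨_, rfl⟩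
  obtain ⟨f, hf'⟩ : ∃ f, f = M 1 0 * p + M 1 1 * r := ⟨_, rfl⟩
  obtain ⟨g, hg⟩ : ∃ g, g = M 0 0 * q + M 0 1 * s := ⟨_, rfl⟩
  obtain ⟨h, hh⟩ : ∃ h, h = M 1 0 * q + M 1 1 * s := ⟨_, rfl⟩
  have f1 := hf 1 0
  have f2 := hf 0 1
  have f3 := hf 1 1
  unfold binForm at f1 f2 f3
  have n11 : e ^ 2 + f ^ 2 = 1 := by rw [he, hf']; linear_combination f1
  have n12 : e * g + f * h = 1 / 2 := by
    rw [he, hf', hg, hh]; linear_combination (f3 - f1 - f2) / 2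
  have nd : e * h - f * g = √3 / 2 := by rw [he, hf', hg, hh]; linear_combination hdet
  have hg' : g = e / 2 - f * (√3 / 2) := by
    linear_combination (-g) * n11 + e * n12 - f * nd
  have hh' : h = f / 2 + e * (√3 / 2) := by
    linear_combination (-h) * n11 + f * n12 + e * nd
  have hRU : !![e, -f; f, e] * A2mat = M * !![(p : ℝ), q; r, s] := by
    ext i j
    fin_cases i <;> fin_cases j <;> simp [A2mat, Matrix.mul_apply, Fin.sum_univ_two]
    · exact he
    · rw [← hg, hg']; ring
    · exact hf'
    · rw [← hh, hh']; ring
  refine ⟨!![e, -f; f, e], ?_, ?_, ?_⟩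
  · ext i j
    fin_cases i <;> fin_cases j <;> simp [Matrix.mul_apply, Fin.sum_univ_two] <;> linarith
  · rw [Matrix.det_fin_two_of]; linarith
  · rw [hRU]
    let E := (finTwoArrowEquiv ℤ).trans ((intEquiv p q r s hd).trans (finTwoArrowEquiv ℤ).symm)
    have hE : ∀ k : Fin 2 → ℤ, (M * !![(p : ℝ), q; r, s]).mulVec (fun j => (k j : ℝ)) =
        M.mulVec (fun j => (E k j : ℝ)) := by
      intro k
      rw [← Matrix.mulVec_mulVec]
      congr 1
      ext j
      fin_cases j <;> simp [E, intEquiv, Matrix.mulVec, dotProduct, Fin.sum_univ_two]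
    ext v
    constructor
    · rintro ⟨k, rfl⟩
      exact ⟨E.symm k, by rw [hE, E.apply_symm_apply]⟩
    · rintro ⟨k, rfl⟩
      exact ⟨E k, hE k⟩

/-- for every Bravais lattice `Λ = Mℤ²` with the same covolume `√3/2` as `A₂`,
every `u ∈ ℝ²` and every `α > 0`, `θ_{A₂+u}(α) ≤ θ_Λ(α)`, with equality iff `u ∈ A₂` and
`Λ = R·A₂` for a rotation `R ∈ SO(2)`. -/
theorem a2_translated_minimal
    (M : Matrix (Fin 2) (Fin 2) ℝ) (hM : |M.det| = Real.sqrt 3 / 2)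
    (u : Fin 2 → ℝ) (α : ℝ) (hα : 0 < α) :
    latTheta 2 A2mat u α ≤ latTheta 2 M 0 α ∧
    (latTheta 2 A2mat u α = latTheta 2 M 0 α ↔
      ((∃ k : Fin 2 → ℤ, u = A2mat.mulVec (fun j => (k j : ℝ))) ∧
        ∃ R : Matrix (Fin 2) (Fin 2) ℝ, R.transpose * R = 1 ∧ R.det = 1 ∧
          {v : Fin 2 → ℝ | ∃ k : Fin 2 → ℤ, v = M.mulVec (fun j => (k j : ℝ))}
            = {v : Fin 2 → ℝ | ∃ k : Fin 2 → ℤ,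
                v = (R * A2mat).mulVec (fun j => (k j : ℝ))})) := by
  have hdetA : A2mat.det = √3 / 2 := by simp [A2mat, Matrix.det_fin_two_of]
  have h3 : 0 < √3 / 2 := by positivity
  have hdet0 : M.det ≠ 0 := by intro h; rw [h, abs_zero] at hM; linarith
  have hD : 4 * (M 0 0 ^ 2 + M 1 0 ^ 2) * (M 0 1 ^ 2 + M 1 1 ^ 2) -
      (2 * (M 0 0 * M 0 1 + M 1 0 * M 1 1)) ^ 2 = 3 := by
    have h := sq_abs M.det
    rw [hM, div_pow, Real.sq_sqrt (by norm_num), Matrix.det_fin_two] at h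
    linarith
  have ha : 0 < M 0 0 ^ 2 + M 1 0 ^ 2 := by
    have h0 : 0 ≤ M 0 0 ^ 2 + M 1 0 ^ 2 := by positivity
    refine lt_of_le_of_ne h0 fun h => ?_
    rw [← h] at hD
    nlinarith [sq_nonneg (2 * (M 0 0 * M 0 1 + M 1 0 * M 1 1))]
  obtain ⟨x, y, rfl⟩ := exists_hex_coords u
  have hmin := form_min ha hD hα
  rw [← latTheta_eq_formTheta, ← latTheta_hex_zero] at hmin
  have hshift := hex_shift hα x y
  rw [← latTheta_hex, ← latTheta_hex_zero] at hshift
  refine ⟨hshift.1.trans hmin.1, fun he => ?_, ?_⟩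
  · obtain ⟨⟨m, hm⟩, n, hn⟩ := hshift.2 (le_antisymm hshift.1 (he ▸ hmin.1))
    refine ⟨⟨![m, n], ?_⟩, exists_rotation M hM (hmin.2 (le_antisymm (he ▸ hshift.1) hmin.1))⟩
    congr 1
    ext j
    fin_cases j <;> simp [hm, hn]
  · rintro ⟨⟨k, hk⟩, R, hR, hRdet, hset⟩
    have h1 : latTheta 2 A2mat (A2mat.mulVec ![x, y]) α = latTheta 2 A2mat 0 α := by
      rw [hk]
      unfold latTheta
      rw [← (Equiv.addRight k).tsum_eq (fun k' : Fin 2 → ℤ => Real.exp (-Real.pi * α *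
        ∑ i, (A2mat.mulVec (fun j => (k' j : ℝ)) i + (0 : Fin 2 → ℝ) i) ^ 2))]
      refine tsum_congr fun k' => ?_
      have : (fun j => (((Equiv.addRight k) k' j : ℤ) : ℝ)) =
          (fun j => (k' j : ℝ)) + fun j => (k j : ℝ) := by
        ext j; simp
      rw [this, Matrix.mulVec_add]
      simp
    have hdetRA : (R * A2mat).det ≠ 0 := by rw [Matrix.det_mul, hRdet, hdetA]; linarith
    rw [h1, ← latTheta_rotate hR α, latTheta_eq_tsum_lattice _ hdetRA,
      latTheta_eq_tsum_lattice _ hdet0, hset]
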